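/- Let G_ℓ be obtained by the powering construction from the base instance G₁ built from a connected unweighted MaxCut instance H with m edges. (i) If H has a cut of size c·m with c > 0, then G_ℓ has a cut of sparsity at most 1/(ℓc). (ii) If every cut of H has size at most s·m with s > 0, then every cut of G_ℓ that separates positive demand has sparsity at least 1/(1 + (ℓ−1)s). -/

import Mathlib

attribute [local instance] Classical.propDecidable

open Finset

namespace Stmt10

/-- A Sparsest Cut instance: a finite vertex set `V` with two designated vertices
`s` and `t`, a finite set `E` of (oriented) supply edges with capacities `cap`, and a
finite set `Dm` of demand pairs with demands `dem`. -/
structure SCI where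
  V : Type
  fV : Fintype V
  dV : DecidableEq V
  s : V
  t : V
  E : Finset (V × V)
  cap : V × V → ℝ
  Dm : Finset (V × V)
  dem : V × V → ℝ

attribute [instance] SCI.fV SCI.dV

namespace SCI

/-- Capacity of a cut `(S, V∖S)`: total capacity of supply edges crossing it. -/
noncomputable def cutCap (I : SCI) (S : Finset I.V) : ℝ :=
  ∑ e ∈ I.E.filter (fun e => ¬((e.1 ∈ S) ↔ (e.2 ∈ S))), I.cap e

/-- Demand separated by a cut `(S, V∖S)`: total demand of demand pairs crossing it. -/
noncomputable def cutDem (I : SCI) (S : Finset I.V) : ℝ :=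
  ∑ q ∈ I.Dm.filter (fun q => ¬((q.1 ∈ S) ↔ (q.2 ∈ S))), I.dem q

end SCI

/-- Vertex set obtained by replacing each capacity edge `e = (u,v)` of `G1` by a copy
of `Gp`, identifying the `s` of the copy with `u` and its `t` with `v`:  the vertices
of `G1` together with, for every edge `e` of `G1`, a copy of the interior (non-`s`,
non-`t`) vertices of `Gp`. -/
abbrev glueV (G1 Gp : SCI) : Type :=
  G1.V ⊕ ({e // e ∈ G1.E} × {v : Gp.V // v ≠ Gp.s ∧ v ≠ Gp.t})

/-- Placement of a vertex `v` of the copy of `Gp` corresponding to edge `e` of `G1`: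
the copy's `s` is identified with `e.1`, its `t` with `e.2`, and interior vertices
keep their identity inside the copy. -/
noncomputable def embed (G1 Gp : SCI) (e : {e // e ∈ G1.E}) (v : Gp.V) : glueV G1 Gp :=
  if h1 : v = Gp.s then Sum.inl e.1.1
  else if h2 : v = Gp.t then Sum.inl e.1.2
  else Sum.inr (e, ⟨v, h1, h2⟩)

/-- One step of the powering operation: replace every capacity edge `e = (u,v)` of
`G1` by a copy of `Gp` (scaled by `cap e`, with its `s` identified with `u` and its
`t` with `v`), and retain the demand edges of `G1` as the new top-level demands. -/
noncomputable def glue (G1 Gp : SCI) : SCI where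
  V := glueV G1 Gp
  fV := inferInstance
  dV := inferInstance
  s := Sum.inl G1.s
  t := Sum.inl G1.t
  E := G1.E.attach.biUnion fun e =>
        Gp.E.image fun f => (embed G1 Gp e f.1, embed G1 Gp e f.2)
  cap := fun p => ∑ e ∈ G1.E.attach, ∑ f ∈ Gp.E,
        if (embed G1 Gp e f.1, embed G1 Gp e f.2) = p then G1.cap e.1 * Gp.cap f else 0
  Dm := (G1.Dm.image fun q => ((Sum.inl q.1 : glueV G1 Gp), (Sum.inl q.2 : glueV G1 Gp))) ∪
        (G1.E.attach.biUnion fun e =>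
          Gp.Dm.image fun f => (embed G1 Gp e f.1, embed G1 Gp e f.2))
  dem := fun p =>
      (∑ q ∈ G1.Dm,
        if ((Sum.inl q.1 : glueV G1 Gp), (Sum.inl q.2 : glueV G1 Gp)) = p
        then G1.dem q else 0) +
      ∑ e ∈ G1.E.attach, ∑ f ∈ Gp.Dm,
        if (embed G1 Gp e f.1, embed G1 Gp e f.2) = p then G1.cap e.1 * Gp.dem f else 0

/-- The powered instance: `Gpow G1 k` is the instance `G_{k+1}` of the paper, i.e.
`Gpow G1 0 = G₁` and `Gpow G1 k = G_{k+1}` is obtained from `G₁` by replacing each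
capacity edge with a copy of `G_k`. -/
noncomputable def Gpow (G1 : SCI) : ℕ → SCI
  | 0 => G1
  | k + 1 => glue G1 (Gpow G1 k)

/-- The base instance `G₁` built from a MaxCut instance `H` on `[n]` with `m` edges:
vertex set `{s,t} ∪ [n]` (`s = inr false`, `t = inr true`), supply edges `(s,i)` and
`(i,t)` of capacity `deg_H(i)/(2m)` for each `i`, and demand `1/m` between `i` and `j`
for each edge `{i,j}` of `H` (each such unordered pair listed once). -/
noncomputable def buildG1 (n : ℕ) (H : SimpleGraph (Fin n)) [DecidableRel H.Adj] : SCI where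
  V := Fin n ⊕ Bool
  fV := inferInstance
  dV := inferInstance
  s := Sum.inr false
  t := Sum.inr true
  E := (Finset.univ.image fun i : Fin n =>
          ((Sum.inr false : Fin n ⊕ Bool), (Sum.inl i : Fin n ⊕ Bool))) ∪
       (Finset.univ.image fun i : Fin n =>
          ((Sum.inl i : Fin n ⊕ Bool), (Sum.inr true : Fin n ⊕ Bool)))
  cap := fun p =>
    match p with
    | (Sum.inr false, Sum.inl i) => (H.degree i : ℝ) / (2 * H.edgeFinset.card)
    | (Sum.inl i, Sum.inr true) => (H.degree i : ℝ) / (2 * H.edgeFinset.card)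
    | _ => 0
  Dm := (Finset.univ.filter fun p : Fin n × Fin n => H.Adj p.1 p.2 ∧ p.1 < p.2).image
          (fun p => ((Sum.inl p.1 : Fin n ⊕ Bool), (Sum.inl p.2 : Fin n ⊕ Bool)))
  dem := fun p =>
    match p with
    | (Sum.inl i, Sum.inl j) => if H.Adj i j then 1 / (H.edgeFinset.card : ℝ) else 0
    | _ => 0

/-- Number of edges of `H` crossing the cut `(A, [n]∖A)`. -/
def bdry {n : ℕ} (H : SimpleGraph (Fin n)) [DecidableRel H.Adj] (A : Finset (Fin n)) : ℕ :=
  ∑ i ∈ A, ∑ j ∈ Aᶜ, if H.Adj i j then 1 else 0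

/-!
Writing `d_S` for the cut pseudometric of a cut `S`, the capacity of `S` in the glued instance is
the sum over supply edges `e` of `G₁` of `cap e` times the capacity of the trace of `S` on the
copy `e`, and that trace separates `s` from `t` exactly when `S` separates the ends of `e`.

Upper bound: an `s`-`t` cut of unit capacity and demand `c` in `G₁` is placed in every copy whose
edge it cuts. The capacity stays `1`, and every level contributes another `c` of demand.

Lower bound: a bound `demand ≤ a * capacity - b * d_S(s, t)` is stable under gluing. Summed over
the copies, the terms `-b * d_S` make up `-b` times the capacity of the trace of `S` on `G₁`, which
pays for part of the new top-level demand. With `a = 1`, `b = 1 - s` at the base, `a` grows by `s`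
per level.
-/

section CutDist

variable {V : Type*}

/-- The cut pseudometric of `S`, with distance `1` between vertices that the cut `(S, V∖S)`
separates. It turns capacities and demands of cuts into sums over all edges. -/
noncomputable def cutDist (S : Finset V) (u v : V) : ℝ :=
  if u ∈ S ↔ v ∈ S then 0 else 1

lemma cutDist_of_iff {S : Finset V} {u v : V} (h : u ∈ S ↔ v ∈ S) : cutDist S u v = 0 :=
  if_pos h

lemma cutDist_of_not_iff {S : Finset V} {u v : V} (h : ¬(u ∈ S ↔ v ∈ S)) : cutDist S u v = 1 :=
  if_neg h

lemma cutDist_nonneg (S : Finset V) (u v : V) : 0 ≤ cutDist S u v := by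
  unfold cutDist
  split_ifs <;> norm_num

lemma cutDist_comm (S : Finset V) (u v : V) : cutDist S u v = cutDist S v u := by
  simp only [cutDist, iff_comm]

lemma cutDist_triangle (S : Finset V) (u v w : V) :
    cutDist S u w ≤ cutDist S u v + cutDist S v w := by
  by_cases hu : u ∈ S <;> by_cases hv : v ∈ S <;> by_cases hw : w ∈ S <;>
    simp [cutDist, hu, hv, hw]

lemma cutDist_add_cutDist_of_not_iff {S : Finset V} {u w : V} (h : ¬(u ∈ S ↔ w ∈ S)) (v : V) :
    cutDist S u v + cutDist S v w = 1 := by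
  by_cases hu : u ∈ S <;> by_cases hv : v ∈ S <;> by_cases hw : w ∈ S <;>
    simp_all [cutDist]

lemma sum_filter_separated (T : Finset (V × V)) (w : V × V → ℝ) (S : Finset V)
    [DecidablePred fun p : V × V ↦ ¬(p.1 ∈ S ↔ p.2 ∈ S)] :
    ∑ p ∈ T with ¬(p.1 ∈ S ↔ p.2 ∈ S), w p = ∑ p ∈ T, w p * cutDist S p.1 p.2 := by
  rw [Finset.sum_filter]
  refine Finset.sum_congr rfl fun p _ ↦ ?_
  by_cases h : p.1 ∈ S ↔ p.2 ∈ S <;> simp [cutDist, h]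

lemma SCI.cutCap_eq_sum (I : SCI) (S : Finset I.V) :
    I.cutCap S = ∑ e ∈ I.E, I.cap e * cutDist S e.1 e.2 :=
  sum_filter_separated _ _ _

lemma SCI.cutDem_eq_sum (I : SCI) (S : Finset I.V) :
    I.cutDem S = ∑ q ∈ I.Dm, I.dem q * cutDist S q.1 q.2 :=
  sum_filter_separated _ _ _

/-- The cut that `S` induces along a vertex map `f`: its trace on one copy of a glued instance,
or on the vertices of the base instance. Unlike `Finset.preimage`, `f` need not be injective. -/
noncomputable def cutPullback {U : Type*} [Fintype U] (f : U → V) (S : Finset V) : Finset U :=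
  {u | f u ∈ S}

lemma cutDist_cutPullback {U : Type*} [Fintype U] (f : U → V) (S : Finset V) (u v : U) :
    cutDist (cutPullback f S) u v = cutDist S (f u) (f v) := by
  simp only [cutDist, cutPullback, Finset.mem_filter_univ]

end CutDist

section Glue

variable {G₁ Gp : SCI}

lemma embed_s (e : {e // e ∈ G₁.E}) : embed G₁ Gp e Gp.s = Sum.inl e.1.1 :=
  dif_pos rfl

lemma embed_t (hst : Gp.s ≠ Gp.t) (e : {e // e ∈ G₁.E}) :
    embed G₁ Gp e Gp.t = Sum.inl e.1.2 :=
  (dif_neg hst.symm).trans (dif_pos rfl)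

lemma sum_fiber_mul {α β R : Type*} [NonUnitalNonAssocSemiring R] {A : Finset α} {T : Finset β}
    {g : α → β} {_ : ∀ a p, Decidable (g a = p)}
    (hg : ∀ a ∈ A, g a ∈ T) (w : α → R) (P : β → R) :
    ∑ p ∈ T, (∑ a ∈ A, if g a = p then w a else 0) * P p = ∑ a ∈ A, w a * P (g a) := by
  simp only [Finset.sum_mul, ite_mul, zero_mul]
  rw [Finset.sum_comm]
  refine Finset.sum_congr rfl fun a ha ↦ ?_
  rw [Finset.sum_eq_single_of_mem (g a) (hg a ha) fun p _ hp ↦ if_neg hp.symm, if_pos rfl]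

lemma sum_edge_copies_mul_cutDist {F : Finset (Gp.V × Gp.V)}
    {T : Finset (glueV G₁ Gp × glueV G₁ Gp)}
    (hT : ∀ e, ∀ f ∈ F, (embed G₁ Gp e f.1, embed G₁ Gp e f.2) ∈ T)
    (w : Gp.V × Gp.V → ℝ) (S : Finset (glueV G₁ Gp)) :
    ∑ p ∈ T, (∑ e ∈ G₁.E.attach, ∑ f ∈ F,
        if (embed G₁ Gp e f.1, embed G₁ Gp e f.2) = p then G₁.cap e.1 * w f else 0) *
          cutDist S p.1 p.2 =
      ∑ e ∈ G₁.E.attach, G₁.cap e.1 *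
        ∑ f ∈ F, w f * cutDist (cutPullback (embed G₁ Gp e) S) f.1 f.2 := by
  simp only [Finset.sum_mul (s := G₁.E.attach)]
  rw [Finset.sum_comm]
  refine Finset.sum_congr rfl fun e _ ↦ ?_
  refine (sum_fiber_mul (hT e) _ fun p ↦ cutDist S p.1 p.2).trans ?_
  simp only [cutDist_cutPullback, mul_assoc, Finset.mul_sum]

lemma cutCap_glue (S : Finset (glueV G₁ Gp)) :
    (glue G₁ Gp).cutCap S =
      ∑ e ∈ G₁.E.attach, G₁.cap e.1 * Gp.cutCap (cutPullback (embed G₁ Gp e) S) := by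
  simp only [Gp.cutCap_eq_sum]
  refine ((glue G₁ Gp).cutCap_eq_sum S).trans (sum_edge_copies_mul_cutDist ?_ Gp.cap S)
  exact fun e f hf ↦ Finset.mem_biUnion.2
    ⟨e, Finset.mem_attach _ _, Finset.mem_image_of_mem _ hf⟩

lemma cutDem_glue (S : Finset (glueV G₁ Gp)) :
    (glue G₁ Gp).cutDem S = G₁.cutDem (cutPullback Sum.inl S) +
      ∑ e ∈ G₁.E.attach, G₁.cap e.1 * Gp.cutDem (cutPullback (embed G₁ Gp e) S) := by
  simp only [SCI.cutDem_eq_sum _ (cutPullback _ S)]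
  refine ((glue G₁ Gp).cutDem_eq_sum S).trans ?_
  simp only [glue, add_mul, Finset.sum_add_distrib]
  congr 1
  · refine (sum_fiber_mul (fun q hq ↦ Finset.mem_union_left _ (Finset.mem_image_of_mem _ hq)) _
      fun p : glueV G₁ Gp × glueV G₁ Gp ↦ cutDist S p.1 p.2).trans ?_
    simp only [cutDist_cutPullback]
  · refine sum_edge_copies_mul_cutDist ?_ Gp.dem S
    exact fun e f hf ↦ Finset.mem_union_right _ <| Finset.mem_biUnion.2
      ⟨e, Finset.mem_attach _ _, Finset.mem_image_of_mem _ hf⟩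

lemma SCI.cutCap_eq_sum_attach (I : SCI) (S : Finset I.V) :
    I.cutCap S = ∑ e ∈ I.E.attach, I.cap e.1 * cutDist S e.1.1 e.1.2 := by
  rw [I.cutCap_eq_sum, ← Finset.sum_attach]

section GlueCut

/-- The cut of a glued instance that follows `T` on the vertices of `G₁` and, inside the copy of an
edge leaving `T`, follows `R`. Copies of edges within `T` are contained in it. It is meant for `T`
without entering edges. -/
noncomputable def glueCut (T : Finset G₁.V) (R : Finset Gp.V) : Finset (glueV G₁ Gp) :=
  {x | match x with
    | Sum.inl v => v ∈ T
    | Sum.inr (e, v) => e.1.1 ∈ T ∧ (e.1.2 ∈ T ∨ v.1 ∈ R)}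

variable {T : Finset G₁.V} {R : Finset Gp.V}

lemma inl_mem_glueCut {v : G₁.V} : Sum.inl v ∈ glueCut T R ↔ v ∈ T := by
  simp [glueCut]

lemma cutPullback_inl_glueCut : cutPullback Sum.inl (glueCut T R) = T := by
  ext v
  simp only [cutPullback, Finset.mem_filter_univ, inl_mem_glueCut]

lemma embed_mem_glueCut (hs : Gp.s ∈ R) (ht : Gp.t ∉ R) {e : {e // e ∈ G₁.E}}
    (he : e.1.2 ∈ T → e.1.1 ∈ T) (v : Gp.V) :
    embed G₁ Gp e v ∈ glueCut T R ↔ e.1.1 ∈ T ∧ (e.1.2 ∈ T ∨ v ∈ R) := by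
  have hst : Gp.s ≠ Gp.t := fun h ↦ ht (h ▸ hs)
  rcases eq_or_ne v Gp.s with rfl | hvs
  · rw [embed_s, inl_mem_glueCut]
    tauto
  rcases eq_or_ne v Gp.t with rfl | hvt
  · rw [embed_t hst, inl_mem_glueCut]
    tauto
  · simp [embed, hvs, hvt, glueCut]

lemma cutDist_cutPullback_glueCut (hs : Gp.s ∈ R) (ht : Gp.t ∉ R) {e : {e // e ∈ G₁.E}}
    (he : e.1.2 ∈ T → e.1.1 ∈ T) (u v : Gp.V) :
    cutDist (cutPullback (embed G₁ Gp e) (glueCut T R)) u v =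
      cutDist T e.1.1 e.1.2 * cutDist R u v := by
  rw [cutDist_cutPullback]
  simp only [cutDist, embed_mem_glueCut hs ht he]
  by_cases h₁ : e.1.1 ∈ T <;> by_cases h₂ : e.1.2 ∈ T <;> simp_all

lemma cutCap_glueCut (hT : ∀ e ∈ G₁.E, e.2 ∈ T → e.1 ∈ T) (hs : Gp.s ∈ R) (ht : Gp.t ∉ R) :
    (glue G₁ Gp).cutCap (glueCut T R) = G₁.cutCap T * Gp.cutCap R := by
  rw [cutCap_glue, G₁.cutCap_eq_sum_attach, Finset.sum_mul]
  refine Finset.sum_congr rfl fun e _ ↦ ?_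
  simp only [Gp.cutCap_eq_sum, cutDist_cutPullback_glueCut hs ht (hT e.1 e.2), mul_assoc,
    Finset.mul_sum, mul_left_comm (Gp.cap _)]

lemma cutDem_glueCut (hT : ∀ e ∈ G₁.E, e.2 ∈ T → e.1 ∈ T) (hs : Gp.s ∈ R) (ht : Gp.t ∉ R) :
    (glue G₁ Gp).cutDem (glueCut T R) = G₁.cutDem T + G₁.cutCap T * Gp.cutDem R := by
  rw [cutDem_glue, cutPullback_inl_glueCut, G₁.cutCap_eq_sum_attach, Finset.sum_mul]
  congr 1
  refine Finset.sum_congr rfl fun e _ ↦ ?_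
  simp only [Gp.cutDem_eq_sum, cutDist_cutPullback_glueCut hs ht (hT e.1 e.2), mul_assoc,
    Finset.mul_sum, mul_left_comm (Gp.dem _)]

end GlueCut

section LowerBound

lemma cutDist_cutPullback_embed_s_t (hst : Gp.s ≠ Gp.t) (S : Finset (glueV G₁ Gp))
    (e : {e // e ∈ G₁.E}) :
    cutDist (cutPullback (embed G₁ Gp e) S) Gp.s Gp.t =
      cutDist (cutPullback Sum.inl S) e.1.1 e.1.2 := by
  rw [cutDist_cutPullback, cutDist_cutPullback, embed_s, embed_t hst]

variable (hcap : ∀ e ∈ G₁.E, 0 ≤ G₁.cap e) (hst : Gp.s ≠ Gp.t)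

include hcap hst in
lemma cutCap_cutPullback_inl_le (hGp : ∀ R, cutDist R Gp.s Gp.t ≤ Gp.cutCap R)
    (S : Finset (glueV G₁ Gp)) :
    G₁.cutCap (cutPullback Sum.inl S) ≤ (glue G₁ Gp).cutCap S := by
  rw [cutCap_glue, G₁.cutCap_eq_sum_attach]
  refine Finset.sum_le_sum fun e _ ↦ mul_le_mul_of_nonneg_left ?_ (hcap e.1 e.2)
  rw [← cutDist_cutPullback_embed_s_t hst]
  exact hGp _

include hcap hst in
lemma cutDem_glue_le {a b : ℝ}
    (hGp : ∀ R, Gp.cutDem R ≤ a * Gp.cutCap R - b * cutDist R Gp.s Gp.t)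
    (S : Finset (glueV G₁ Gp)) :
    (glue G₁ Gp).cutDem S ≤ G₁.cutDem (cutPullback Sum.inl S) +
      (a * (glue G₁ Gp).cutCap S - b * G₁.cutCap (cutPullback Sum.inl S)) := by
  rw [cutDem_glue, cutCap_glue, G₁.cutCap_eq_sum_attach, Finset.mul_sum, Finset.mul_sum,
    ← Finset.sum_sub_distrib]
  gcongr with e
  rw [← cutDist_cutPullback_embed_s_t hst]
  calc G₁.cap e.1 * Gp.cutDem (cutPullback (embed G₁ Gp e) S)
      ≤ G₁.cap e.1 * _ := mul_le_mul_of_nonneg_left (hGp _) (hcap e.1 e.2)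
    _ = _ := by ring

end LowerBound

end Glue

section Powering

variable {G₁ : SCI}

lemma Gpow_s_ne_t (hst : G₁.s ≠ G₁.t) : ∀ k, (Gpow G₁ k).s ≠ (Gpow G₁ k).t
  | 0 => hst
  | _ + 1 => Sum.inl_injective.ne hst

lemma exists_cut_Gpow {T : Finset G₁.V} (hs : G₁.s ∈ T) (ht : G₁.t ∉ T)
    (hT : ∀ e ∈ G₁.E, e.2 ∈ T → e.1 ∈ T) (hcap : G₁.cutCap T = 1) (k : ℕ) :
    ∃ S : Finset (Gpow G₁ k).V, (Gpow G₁ k).s ∈ S ∧ (Gpow G₁ k).t ∉ S ∧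
      (Gpow G₁ k).cutCap S = 1 ∧ (Gpow G₁ k).cutDem S = (k + 1) * G₁.cutDem T := by
  induction k with
  | zero => exact ⟨T, hs, ht, hcap, by simp [Gpow]⟩
  | succ k ih =>
    obtain ⟨R, hsR, htR, hcapR, hdemR⟩ := ih
    refine ⟨glueCut T R, inl_mem_glueCut.2 hs, mt inl_mem_glueCut.1 ht, ?_, ?_⟩
    · exact (cutCap_glueCut hT hsR htR).trans (by rw [hcap, hcapR, one_mul])
    · refine (cutDem_glueCut hT hsR htR).trans ?_
      rw [hcap, hdemR]
      push_cast
      ring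

variable (hst : G₁.s ≠ G₁.t) (hcap : ∀ e ∈ G₁.E, 0 ≤ G₁.cap e)
  (hflow : ∀ T, cutDist T G₁.s G₁.t ≤ G₁.cutCap T)

include hst hcap hflow

lemma cutDist_le_cutCap_Gpow (k : ℕ) (S : Finset (Gpow G₁ k).V) :
    cutDist S (Gpow G₁ k).s (Gpow G₁ k).t ≤ (Gpow G₁ k).cutCap S := by
  induction k with
  | zero => exact hflow S
  | succ k ih =>
    calc cutDist S (Sum.inl G₁.s) (Sum.inl G₁.t)
        = cutDist (cutPullback Sum.inl S) G₁.s G₁.t := (cutDist_cutPullback _ _ _ _).symm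
      _ ≤ G₁.cutCap (cutPullback Sum.inl S) := hflow _
      _ ≤ (glue G₁ (Gpow G₁ k)).cutCap S :=
          cutCap_cutPullback_inl_le hcap (Gpow_s_ne_t hst k) ih S

lemma cutDem_Gpow_le {s : ℝ} (hs : 0 ≤ s)
    (hdem : ∀ T, G₁.cutDem T ≤ G₁.cutCap T - (1 - s) * cutDist T G₁.s G₁.t)
    (k : ℕ) (S : Finset (Gpow G₁ k).V) :
    (Gpow G₁ k).cutDem S ≤ (1 + k * s) * (Gpow G₁ k).cutCap S -
      (1 - s) * cutDist S (Gpow G₁ k).s (Gpow G₁ k).t := by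
  induction k with
  | zero => simpa [Gpow] using hdem S
  | succ k ih =>
    have hpst := Gpow_s_ne_t hst k
    set T : Finset G₁.V := cutPullback Sum.inl S
    have htrace : G₁.cutCap T ≤ (Gpow G₁ (k + 1)).cutCap S :=
      cutCap_cutPullback_inl_le hcap hpst (cutDist_le_cutCap_Gpow hst hcap hflow k) S
    have hdist : cutDist T G₁.s G₁.t = cutDist S (Gpow G₁ (k + 1)).s (Gpow G₁ (k + 1)).t :=
      cutDist_cutPullback _ _ _ _
    calc (Gpow G₁ (k + 1)).cutDem S
        ≤ G₁.cutDem T + ((1 + k * s) * (Gpow G₁ (k + 1)).cutCap S - (1 - s) * G₁.cutCap T) :=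
          cutDem_glue_le hcap hpst ih S
      _ ≤ (1 + k * s) * (Gpow G₁ (k + 1)).cutCap S + s * G₁.cutCap T -
            (1 - s) * cutDist T G₁.s G₁.t := by linarith [hdem T]
      _ ≤ (1 + k * s) * (Gpow G₁ (k + 1)).cutCap S + s * (Gpow G₁ (k + 1)).cutCap S -
            (1 - s) * cutDist T G₁.s G₁.t := by gcongr
      _ = _ := by
          rw [hdist]
          push_cast
          ring

-- The term `(1 - s) * cutDist` of the invariant can be dropped only for `s ≤ 1`, hence `min s 1`.
lemma cutDem_Gpow_le_mul_cutCap {s : ℝ} (hs : 0 ≤ s)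
    (hdem : ∀ T, G₁.cutDem T ≤ G₁.cutCap T - (1 - min s 1) * cutDist T G₁.s G₁.t)
    (k : ℕ) (S : Finset (Gpow G₁ k).V) :
    (Gpow G₁ k).cutDem S ≤ (1 + k * s) * (Gpow G₁ k).cutCap S := by
  have hdist : 0 ≤ (1 - min s 1) * cutDist S (Gpow G₁ k).s (Gpow G₁ k).t :=
    mul_nonneg (sub_nonneg.2 (min_le_right s 1)) (cutDist_nonneg _ _ _)
  have hcapS : 0 ≤ (Gpow G₁ k).cutCap S :=
    (cutDist_nonneg _ _ _).trans (cutDist_le_cutCap_Gpow hst hcap hflow k S)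
  calc (Gpow G₁ k).cutDem S
      ≤ (1 + k * min s 1) * (Gpow G₁ k).cutCap S := by
        linarith [cutDem_Gpow_le hst hcap hflow (le_min hs zero_le_one) hdem k S]
    _ ≤ (1 + k * s) * (Gpow G₁ k).cutCap S := by
        gcongr
        exact min_le_left s 1

end Powering

section NeighborSums

variable {V : Type*} [Fintype V] (G : SimpleGraph V) [DecidableRel G.Adj]

lemma sum_sum_adj_comm {M : Type*} [AddCommMonoid M] (f : V → V → M) :
    ∑ i, ∑ j with G.Adj i j, f i j = ∑ i, ∑ j with G.Adj i j, f j i :=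
  Finset.sum_comm' fun i j ↦ by simp [G.adj_comm]

lemma sum_adj_const {R : Type*} [NonAssocSemiring R] (i : V) (x : R) :
    ∑ j with G.Adj i j, x = G.degree i * x := by
  rw [Finset.sum_const, nsmul_eq_mul, ← G.card_neighborFinset_eq_degree,
    G.neighborFinset_eq_filter]

lemma sum_adj_le_two_mul_sum_degree_mul {f : V → V → ℝ} {g : V → ℝ}
    (h : ∀ i j, f i j ≤ g i + g j) :
    ∑ i, ∑ j with G.Adj i j, f i j ≤ 2 * ∑ i, G.degree i * g i := by
  have hdeg : ∑ i, ∑ j with G.Adj i j, g i = ∑ i, G.degree i * g i :=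
    Finset.sum_congr rfl fun i _ ↦ sum_adj_const G i _
  calc ∑ i, ∑ j with G.Adj i j, f i j
      ≤ ∑ i, ∑ j with G.Adj i j, (g i + g j) := by
        gcongr
        exact h _ _
    _ = 2 * ∑ i, G.degree i * g i := by
        simp only [Finset.sum_add_distrib]
        rw [sum_sum_adj_comm G fun _ j ↦ g j, hdeg, two_mul]

lemma two_mul_sum_adj_lt [LinearOrder V] {R : Type*} [NonAssocSemiring R] {f : V → V → R}
    (hf : ∀ i j, f i j = f j i) :
    2 * ∑ p : V × V with G.Adj p.1 p.2 ∧ p.1 < p.2, f p.1 p.2 =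
      ∑ i, ∑ j with G.Adj i j, f i j := by
  have hsplit (i j : V) : (if G.Adj i j then f i j else 0) =
      (if G.Adj i j ∧ i < j then f i j else 0) + if G.Adj j i ∧ j < i then f j i else 0 := by
    rcases lt_trichotomy i j with h | rfl | h
    · simp [h, h.not_gt]
    · simp
    · simp [h, h.not_gt, G.adj_comm, hf]
  simp only [Finset.sum_filter, Fintype.sum_prod_type, hsplit, Finset.sum_add_distrib]
  rw [Finset.sum_comm (f := fun i j ↦ if G.Adj j i ∧ j < i then f j i else 0), two_mul]

end NeighborSums

section BaseInstance

variable {n : ℕ} (H : SimpleGraph (Fin n)) [DecidableRel H.Adj]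

lemma bdry_eq_sum_adj (A : Finset (Fin n)) :
    (bdry H A : ℝ) = ∑ i, ∑ j with H.Adj i j, if i ∈ A ∧ j ∉ A then 1 else 0 := by
  have hinner (i : Fin n) : ∑ j with H.Adj i j, (if i ∈ A ∧ j ∉ A then (1 : ℝ) else 0) =
      if i ∈ A then ∑ j ∈ Aᶜ, (if H.Adj i j then 1 else 0) else 0 := by
    by_cases hi : i ∈ A
    · simp only [hi, true_and, if_true, ← Finset.sum_filter]
      exact Finset.sum_congr (by ext; simp [and_comm]) fun _ _ ↦ rfl
    · simp [hi]
  simp only [bdry, Nat.cast_sum, Nat.cast_ite, Nat.cast_one, Nat.cast_zero, hinner,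
    Finset.sum_ite_mem, Finset.univ_inter]

lemma two_mul_bdry (A : Finset (Fin n)) :
    2 * (bdry H A : ℝ) = ∑ i, ∑ j with H.Adj i j, cutDist A i j := by
  have hswap : (bdry H A : ℝ) = ∑ i, ∑ j with H.Adj i j, if j ∈ A ∧ i ∉ A then 1 else 0 :=
    (bdry_eq_sum_adj H A).trans (sum_sum_adj_comm H _)
  rw [two_mul]
  nth_rw 1 [bdry_eq_sum_adj]
  rw [hswap]
  simp only [← Finset.sum_add_distrib]
  refine Finset.sum_congr rfl fun i _ ↦ Finset.sum_congr rfl fun j _ ↦ ?_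
  by_cases hi : i ∈ A <;> by_cases hj : j ∈ A <;> simp [cutDist, hi, hj]

lemma cutDem_buildG1 (S : Finset (Fin n ⊕ Bool)) :
    (buildG1 n H).cutDem S =
      (∑ i, ∑ j with H.Adj i j, cutDist S (Sum.inl i) (Sum.inl j)) / (2 * #H.edgeFinset) := by
  rw [← two_mul_sum_adj_lt H fun i j ↦ cutDist_comm _ _ _, mul_div_mul_left _ _ two_ne_zero,
    Finset.sum_div]
  refine ((buildG1 n H).cutDem_eq_sum S).trans ((Finset.sum_image ?_).trans ?_)
  · exact (Sum.inl_injective.prodMap Sum.inl_injective).injOn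
  refine Finset.sum_congr (by ext; simp) fun p hp ↦ ?_
  have hadj : H.Adj p.1 p.2 := And.left (by simpa using hp)
  simp [buildG1, hadj, div_eq_inv_mul]

lemma cutDem_buildG1_eq_bdry_div (S : Finset (Fin n ⊕ Bool)) :
    (buildG1 n H).cutDem S = bdry H (cutPullback Sum.inl S) / #H.edgeFinset := by
  rw [cutDem_buildG1, ← mul_div_mul_left (bdry H _ : ℝ) _ two_ne_zero, two_mul_bdry]
  simp only [cutDist_cutPullback]

lemma forall_mem_buildG1_E {P : (Fin n ⊕ Bool) × (Fin n ⊕ Bool) → Prop}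
    (hs : ∀ i, P (Sum.inr false, Sum.inl i)) (ht : ∀ i, P (Sum.inl i, Sum.inr true)) :
    ∀ e ∈ (buildG1 n H).E, P e := by
  refine Finset.forall_mem_union.2 ⟨?_, ?_⟩
  · exact Finset.forall_mem_image.2 fun i _ ↦ hs i
  · exact Finset.forall_mem_image.2 fun i _ ↦ ht i

lemma cutCap_buildG1 (S : Finset (Fin n ⊕ Bool)) :
    (buildG1 n H).cutCap S = ∑ i, H.degree i / (2 * #H.edgeFinset : ℝ) *
      (cutDist S (Sum.inr false) (Sum.inl i) + cutDist S (Sum.inl i) (Sum.inr true)) := by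
  refine ((buildG1 n H).cutCap_eq_sum S).trans ?_
  simp only [mul_add, Finset.sum_add_distrib]
  refine (Finset.sum_union ?_).trans (congrArg₂ (· + ·) ?_ ?_)
  · change Disjoint (univ.image fun i ↦ (Sum.inr false, Sum.inl i))
      (univ.image fun i ↦ (Sum.inl i, Sum.inr true))
    simp [Finset.disjoint_left]
  · exact Finset.sum_image fun _ _ _ _ h ↦ Sum.inl_injective (congrArg Prod.snd h)
  · exact Finset.sum_image fun _ _ _ _ h ↦ Sum.inl_injective (congrArg Prod.fst h)

lemma sum_degree_div_two_mul_card_edgeFinset (hm : 0 < #H.edgeFinset) :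
    ∑ i, H.degree i / (2 * #H.edgeFinset : ℝ) = 1 := by
  have hsum : ∑ i, (H.degree i : ℝ) = 2 * #H.edgeFinset :=
    mod_cast H.sum_degrees_eq_twice_card_edges
  rw [← Finset.sum_div, hsum, div_self (by positivity)]

lemma cutCap_buildG1_of_separated (hm : 0 < #H.edgeFinset) {S : Finset (Fin n ⊕ Bool)}
    (hS : ¬(Sum.inr false ∈ S ↔ Sum.inr true ∈ S)) : (buildG1 n H).cutCap S = 1 := by
  simp only [cutCap_buildG1, cutDist_add_cutDist_of_not_iff hS, mul_one]
  exact sum_degree_div_two_mul_card_edgeFinset H hm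

lemma cap_buildG1_nonneg : ∀ e ∈ (buildG1 n H).E, 0 ≤ (buildG1 n H).cap e := by
  have hdeg (i : Fin n) : 0 ≤ H.degree i / (2 * #H.edgeFinset : ℝ) := by positivity
  exact forall_mem_buildG1_E H hdeg hdeg

lemma cutDist_le_cutCap_buildG1 (hm : 0 < #H.edgeFinset) (S : Finset (Fin n ⊕ Bool)) :
    cutDist S (Sum.inr false) (Sum.inr true) ≤ (buildG1 n H).cutCap S := by
  rw [cutCap_buildG1, ← one_mul (cutDist _ _ _), ← sum_degree_div_two_mul_card_edgeFinset H hm,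
    Finset.sum_mul]
  gcongr
  exact cutDist_triangle _ _ _ _

-- Route each demand edge through `s` and through `t`, and average the two bounds.
lemma cutDem_le_cutCap_buildG1 (S : Finset (Fin n ⊕ Bool)) :
    (buildG1 n H).cutDem S ≤ (buildG1 n H).cutCap S := by
  have hroute (x : Fin n ⊕ Bool) := sum_adj_le_two_mul_sum_degree_mul H fun i j ↦
    (cutDist_triangle S (Sum.inl i) x (Sum.inl j)).trans_eq
      (congrArg (_ + ·) (cutDist_comm S x (Sum.inl j)))
  have hs := hroute (Sum.inr false)
  have ht := hroute (Sum.inr true)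
  simp only [cutDem_buildG1, cutCap_buildG1, div_mul_eq_mul_div]
  rw [← Finset.sum_div]
  refine div_le_div_of_nonneg_right ?_ (by positivity)
  simp only [cutDist_comm S (Sum.inr false), mul_add, Finset.sum_add_distrib]
  linarith

lemma cutDem_buildG1_le (hm : 0 < #H.edgeFinset) {s : ℝ}
    (hs : ∀ A, (bdry H A : ℝ) ≤ s * #H.edgeFinset) (S : Finset (Fin n ⊕ Bool)) :
    (buildG1 n H).cutDem S ≤ (buildG1 n H).cutCap S -
      (1 - min s 1) * cutDist S (Sum.inr false) (Sum.inr true) := by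
  have hle := cutDem_le_cutCap_buildG1 H S
  by_cases hS : Sum.inr false ∈ S ↔ Sum.inr true ∈ S
  · rwa [cutDist_of_iff hS, mul_zero, sub_zero]
  · rw [cutCap_buildG1_of_separated H hm hS] at hle ⊢
    rw [cutDist_of_not_iff hS, mul_one, sub_sub_cancel]
    refine le_min ?_ hle
    rw [cutDem_buildG1_eq_bdry_div]
    exact (div_le_iff₀ (mod_cast hm)).2 (hs _)

end BaseInstance

section SparsestCut

variable {n : ℕ} (H : SimpleGraph (Fin n)) [DecidableRel H.Adj]

lemma buildG1_s_ne_t : (buildG1 n H).s ≠ (buildG1 n H).t :=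
  Sum.inr_injective.ne Bool.false_ne_true

lemma exists_cut_Gpow_buildG1 (hm : 0 < #H.edgeFinset) (A : Finset (Fin n)) (k : ℕ) :
    ∃ S : Finset (Gpow (buildG1 n H) k).V, (Gpow (buildG1 n H) k).cutCap S = 1 ∧
      (Gpow (buildG1 n H) k).cutDem S = (k + 1) * (bdry H A / #H.edgeFinset) := by
  let T : Finset (Fin n ⊕ Bool) := A.disjSum {false}
  have hs : Sum.inr false ∈ T := by simp [T]
  have ht : Sum.inr true ∉ T := by simp [T]
  have hA : cutPullback Sum.inl T = A := by
    ext i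
    simp [cutPullback, T]
  have hE : ∀ e ∈ (buildG1 n H).E, e.2 ∈ T → e.1 ∈ T :=
    forall_mem_buildG1_E H (fun _ _ ↦ hs) fun _ h ↦ absurd h ht
  obtain ⟨S, -, -, hcap, hdem⟩ := exists_cut_Gpow hs ht hE
    (cutCap_buildG1_of_separated H hm fun h ↦ ht (h.1 hs)) k
  exact ⟨S, hcap, by rw [hdem, cutDem_buildG1_eq_bdry_div, hA]⟩

lemma cutDem_Gpow_buildG1_le (hm : 0 < #H.edgeFinset) {s : ℝ}
    (hs : ∀ A, (bdry H A : ℝ) ≤ s * #H.edgeFinset) (k : ℕ)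
    (S : Finset (Gpow (buildG1 n H) k).V) :
    (Gpow (buildG1 n H) k).cutDem S ≤ (1 + k * s) * (Gpow (buildG1 n H) k).cutCap S := by
  have hs0 : 0 ≤ s :=
    nonneg_of_mul_nonneg_left ((Nat.cast_nonneg _).trans (hs ∅)) (mod_cast hm)
  exact cutDem_Gpow_le_mul_cutCap (buildG1_s_ne_t H) (cap_buildG1_nonneg H)
    (cutDist_le_cutCap_buildG1 H hm) hs0 (cutDem_buildG1_le H hm hs) k S

end SparsestCut

theorem stmt_10_general (n : ℕ) (H : SimpleGraph (Fin n)) [DecidableRel H.Adj]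
    (hm : 0 < H.edgeFinset.card) (ℓ : ℕ) (hℓ : 1 ≤ ℓ) :
    (∀ c : ℝ, 0 < c → (∃ A : Finset (Fin n), (bdry H A : ℝ) = c * H.edgeFinset.card) →
      ∃ S : Finset (Gpow (buildG1 n H) (ℓ - 1)).V,
        0 < (Gpow (buildG1 n H) (ℓ - 1)).cutDem S ∧
        (Gpow (buildG1 n H) (ℓ - 1)).cutCap S / (Gpow (buildG1 n H) (ℓ - 1)).cutDem S
          ≤ 1 / ((ℓ : ℝ) * c)) ∧
    (∀ s : ℝ, 0 < s → (∀ A : Finset (Fin n), (bdry H A : ℝ) ≤ s * H.edgeFinset.card) →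
      ∀ S : Finset (Gpow (buildG1 n H) (ℓ - 1)).V,
        0 < (Gpow (buildG1 n H) (ℓ - 1)).cutDem S →
        1 / (1 + ((ℓ : ℝ) - 1) * s) ≤
          (Gpow (buildG1 n H) (ℓ - 1)).cutCap S / (Gpow (buildG1 n H) (ℓ - 1)).cutDem S) := by
  obtain ⟨k, rfl⟩ : ∃ k, ℓ = k + 1 := ⟨ℓ - 1, by omega⟩
  rw [Nat.add_sub_cancel]
  push_cast
  refine ⟨fun c hc ⟨A, hA⟩ ↦ ?_, fun s hs hcut S hS ↦ ?_⟩
  · obtain ⟨S, hcap, hdem⟩ := exists_cut_Gpow_buildG1 H hm A k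
    rw [hA, mul_div_cancel_right₀ c (by positivity)] at hdem
    refine ⟨S, ?_, ?_⟩
    · rw [hdem]
      positivity
    · rw [hcap, hdem]
  · rw [add_sub_cancel_right, div_le_div_iff₀ (by positivity) hS, one_mul, mul_comm]
    exact cutDem_Gpow_buildG1_le H hm hcut k S

/-- Let `G_ℓ` be obtained by the powering construction from the base
instance `G₁` built from a connected unweighted MaxCut instance `H` with `m` edges.
(i) If `H` has a cut of size `c·m` with `c > 0`, then `G_ℓ` has a cut of sparsity at
most `1/(ℓc)`.
(ii) If every cut of `H` has size at most `s·m` with `s > 0`, then every cut of `G_ℓ`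
that separates positive demand has sparsity at least `1/(1 + (ℓ−1)s)`. -/
theorem stmt_10 (n : ℕ) (H : SimpleGraph (Fin n)) [DecidableRel H.Adj]
    (hconn : H.Connected) (hm : 0 < H.edgeFinset.card)
    (ℓ : ℕ) (hℓ : 1 ≤ ℓ) :
    (∀ c : ℝ, 0 < c → (∃ A : Finset (Fin n), (bdry H A : ℝ) = c * H.edgeFinset.card) →
      ∃ S : Finset (Gpow (buildG1 n H) (ℓ - 1)).V,
        0 < (Gpow (buildG1 n H) (ℓ - 1)).cutDem S ∧
        (Gpow (buildG1 n H) (ℓ - 1)).cutCap S / (Gpow (buildG1 n H) (ℓ - 1)).cutDem S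
          ≤ 1 / ((ℓ : ℝ) * c)) ∧
    (∀ s : ℝ, 0 < s → (∀ A : Finset (Fin n), (bdry H A : ℝ) ≤ s * H.edgeFinset.card) →
      ∀ S : Finset (Gpow (buildG1 n H) (ℓ - 1)).V,
        0 < (Gpow (buildG1 n H) (ℓ - 1)).cutDem S →
        1 / (1 + ((ℓ : ℝ) - 1) * s) ≤
          (Gpow (buildG1 n H) (ℓ - 1)).cutCap S / (Gpow (buildG1 n H) (ℓ - 1)).cutDem S) :=
  stmt_10_general n H hm ℓ hℓ

end Stmt10
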